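/- arXiv:2012.05638 — 5 statements merged into one kernel-verified Lean document; each statement's English description precedes it below -/
import Mathlib

section
/- Let n ≥ 2 and let ω(z) = z^n + Σ_{j=0}^{n-2} c_j z^j be a monic complex polynomial of degree n with vanishing z^{n-1} coefficient. If there exists an entire function ν : ℂ → ℂ such that ω(ν(λ)) = λ^n for all λ ∈ ℂ, then c_j = 0 for all j, i.e. ω(z) = z^n. -/
/-- If the branch `ν` of `ω(ν(λ)) = λ^n` extends to an entire function,
then `ω` is the monomial `z^n`, i.e. all lower-order coefficients vanish. -/
theorem stmt5 (n : ℕ) (hn : 2 ≤ n) (c : ℕ → ℂ) (ν : ℂ → ℂ)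
    (hν : Differentiable ℂ ν)
    (hω : ∀ z : ℂ,
      (ν z) ^ n + ∑ j ∈ Finset.range (n - 1), c j * (ν z) ^ j = z ^ n) :
    ∀ j ∈ Finset.range (n - 1), c j = 0 := by
  set S : ℝ := ∑ j ∈ Finset.range (n - 1), ‖c j‖ with hS
  have hS0 : 0 ≤ S := Finset.sum_nonneg fun _ _ => norm_nonneg _
  -- growth bound
  have hgrow : ∀ z, ‖ν z‖ ≤ 2 * ‖z‖ + 2 * S + 1 := by
    intro z
    by_contra! hlt
    have hz := norm_nonneg z
    have h1 : 1 ≤ ‖ν z‖ := by linarith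
    have hsum : ‖∑ j ∈ Finset.range (n - 1), c j * (ν z) ^ j‖ ≤ S * ‖ν z‖ ^ (n - 1) := by
      rw [hS, Finset.sum_mul]
      refine norm_sum_le_of_le _ fun j hj => ?_
      rw [norm_mul, norm_pow]
      have hj' := Finset.mem_range.1 hj
      exact mul_le_mul_of_nonneg_left (pow_le_pow_right₀ h1 hj'.le) (norm_nonneg _)
    have hp : ‖ν z‖ ^ n = ‖ν z‖ ^ (n - 1) * ‖ν z‖ := by
      rw [← pow_succ]; congr 1; omega
    have hpos : 0 < ‖ν z‖ ^ (n - 1) := by positivity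
    have h2 : ‖ν z‖ ^ n ≤ ‖z‖ ^ n + S * ‖ν z‖ ^ (n - 1) := by
      have : ν z ^ n = z ^ n - ∑ j ∈ Finset.range (n - 1), c j * (ν z) ^ j := by
        rw [← hω z]; ring
      rw [← norm_pow, this]
      refine (norm_sub_le _ _).trans ?_
      rw [norm_pow]; linarith
    have h3 : (2 * ‖z‖) ^ n < ‖ν z‖ ^ n :=
      pow_lt_pow_left₀ (by linarith) (by positivity) (by omega)
    have h4 : 2 * ‖z‖ ^ n ≤ (2 * ‖z‖) ^ n := by
      rw [mul_pow]
      refine mul_le_mul_of_nonneg_right ?_ (by positivity)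
      exact le_self_pow₀ (by norm_num) (by omega)
    have h5 : 2 * S * ‖ν z‖ ^ (n - 1) ≤ ‖ν z‖ ^ n := by
      rw [hp]; nlinarith
    linarith
  -- the derivative is constant
  have hder : ∀ z, ‖deriv ν z‖ ≤ 4 + (2 * S + 1) := by
    intro z
    have hz := norm_nonneg z
    have hR : 0 < ‖z‖ + 1 := by linarith
    have := Complex.norm_deriv_le_of_forall_mem_sphere_norm_le (f := ν) (c := z)
      (R := ‖z‖ + 1) (C := 4 * ‖z‖ + 2 + 2 * S + 1) hR hν.diffContOnCl (by
        intro w hw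
        have hw' : ‖w - z‖ = ‖z‖ + 1 := by simpa [dist_eq_norm] using hw
        have : ‖w‖ ≤ ‖w - z‖ + ‖z‖ := by simpa using norm_add_le (w - z) z
        linarith [hgrow w])
    refine this.trans ?_
    rw [div_le_iff₀ hR]
    nlinarith
  obtain ⟨a, ha⟩ := (hν.deriv).exists_const_forall_eq_of_bounded (by
    rw [isBounded_iff_forall_norm_le]
    exact ⟨_, by rintro _ ⟨z, rfl⟩; exact hder z⟩)
  have hlin : ∀ z, ν z = a * z + ν 0 := by
    intro z
    have hd : Differentiable ℂ (fun z => ν z - a * z) := by fun_prop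
    have := is_const_of_deriv_eq_zero hd (fun x => by
      have h1 : HasDerivAt (fun z => ν z - a * z) (deriv ν x - a * 1) x :=
        (hν x).hasDerivAt.sub ((hasDerivAt_id x).const_mul a)
      rw [h1.deriv, ha]; ring) z 0
    simp only [mul_zero, sub_zero] at this
    rw [← this]; ring
  set b := ν 0 with hb
  have ha0 : a ≠ 0 := by
    rintro rfl
    have h0 := hω 0
    have h1 := hω 1
    rw [hlin] at h0 h1
    simp only [zero_mul, zero_add] at h0 h1
    rw [h0, zero_pow (by omega), one_pow] at h1
    exact zero_ne_one h1
  let P : Polynomial ℂ := Polynomial.X ^ n +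
    ∑ j ∈ Finset.range (n - 1), Polynomial.C (c j) * Polynomial.X ^ j
  have hP : P = Polynomial.C ((a⁻¹) ^ n) * (Polynomial.X + Polynomial.C (-b)) ^ n := by
    apply Polynomial.funext
    intro w
    have h := hω (a⁻¹ * (w - b))
    have hw : ν (a⁻¹ * (w - b)) = w := by rw [hlin]; field_simp; ring
    rw [hw] at h
    simp only [P, Polynomial.eval_add, Polynomial.eval_finsetSum, Polynomial.eval_mul,
      Polynomial.eval_pow, Polynomial.eval_X, Polynomial.eval_C]
    rw [h, mul_pow, sub_eq_add_neg]
  have hco : ∀ k, (if k = n then (1:ℂ) else 0) + (if k < n - 1 then c k else 0) =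
      (a⁻¹) ^ n * ((-b) ^ (n - k) * (n.choose k : ℂ)) := by
    intro k
    have h := congrArg (fun p => Polynomial.coeff p k) hP
    simp only [P, Polynomial.coeff_C_mul, Polynomial.coeff_X_add_C_pow, Polynomial.coeff_add,
      Polynomial.finsetSum_coeff, Polynomial.coeff_X_pow] at h
    rw [← h]
    simp
  have hn1 := hco n
  have hn2 := hco (n - 1)
  rw [if_pos rfl, if_neg (by omega), Nat.sub_self, Nat.choose_self] at hn1
  rw [if_neg (by omega), if_neg (by omega), show n - (n - 1) = 1 by omega] at hn2
  have hb0 : b = 0 := by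
    have hch : (n.choose (n - 1) : ℂ) ≠ 0 := by
      exact_mod_cast (Nat.choose_pos (by omega)).ne'
    have : (a⁻¹) ^ n ≠ 0 := pow_ne_zero _ (inv_ne_zero ha0)
    simpa [ha0, hch] using hn2.symm
  intro j hj
  have hj' := Finset.mem_range.1 hj
  have h := hco j
  rw [if_neg (by omega), if_pos hj', hb0, neg_zero, zero_pow (by omega)] at h
  simpa using h
end

section
/- Let n ≥ 1, λ ∈ ℂ, α = exp(2πi/n), and let ν : ℂ → ℂ be any function; write ν_j = ν(α^{j−1}λ) for j = 1, …, n (so ν₁ = ν(λ)), and let w ∈ ℂ. Let b⋆, β⋆ be n×n complex matrices and define n×n matrices M⁺, M⁻, M by M⁺_{jk} = Σ_{ℓ=1}^{n} conj(b⋆_{kℓ}) · (−i ν_j)^{ℓ−1}, M⁻_{jk} = e^{−i ν_j} · Σ_{ℓ=1}^{n} conj(β⋆_{kℓ}) · (−i ν_j)^{ℓ−1}, and M = M⁺ + M⁻; set Δ = det M and assume Δ ≠ 0. For j, k ∈ {1, …, n} let X_{jk} denote the cyclic minor of M (the (N−1)×(N−1) submatrix of [[M,M],[M,M]] whose top-left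 entry is the (j+1, k+1) entry of its parent, with N = n). Let φ : ℝ → ℂ be integrable on (0,1) and define F^±φ = (± w / (2π Δ)) · Σ_{j=1}^{n} Σ_{k=1}^{n} (−1)^{(n−1)(j+k)} · det(X_{jk}) · M^±_{1k} · ∫₀¹ e^{−i ν_j x} φ(x) dx. Then F⁺φ − F⁻φ = (w / 2π) · ∫₀¹ e^{−i ν(λ) x} φ(x) dx. -/
open MeasureTheory

open Fin.NatCast Fin.CommRing in
lemma sign_addRight_fin (m : ℕ) (j : Fin (m + 1)) :
    Equiv.Perm.sign (Equiv.addRight j) = (-1) ^ (m * j.1) := by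
  have h : (Equiv.addRight j : Equiv.Perm (Fin (m + 1))) = finRotate (m + 1) ^ j.1 := by
    have key : ∀ (a : ℕ) (p : Fin (m + 1)), (finRotate (m + 1) ^ a) p = p + (a : Fin (m + 1)) := by
      intro a
      induction a with
      | zero => intro p; simp
      | succ a ih =>
        intro p
        rw [pow_succ', Equiv.Perm.mul_apply, ih, finRotate_apply]
        push_cast
        rw [add_assoc]
    ext p
    rw [key]
    simp
  rw [h, map_pow, sign_finRotate, ← pow_mul]
  simp

lemma cyclic_cofactor (m : ℕ) (M : Matrix (Fin (m + 1)) (Fin (m + 1)) ℂ) (j k : Fin (m + 1)) :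
    (-1 : ℂ) ^ (m * (j.1 + k.1)) *
      (M.submatrix (fun p : Fin m => p.succ + j) (fun q : Fin m => q.succ + k)).det
      = M.adjugate k j := by
  rw [Matrix.adjugate_apply]
  set A := M.updateRow j (Pi.single k 1) with hA
  have h1 : (A.submatrix (Equiv.addRight j) (Equiv.addRight k)).det =
      (-1 : ℂ) ^ (m * (j.1 + k.1)) * A.det := by
    have : A.submatrix (Equiv.addRight j) (Equiv.addRight k) =
      (A.submatrix (Equiv.addRight j) id).submatrix id (Equiv.addRight k) := rfl
    rw [this, Matrix.det_permute', Matrix.det_permute, sign_addRight_fin, sign_addRight_fin]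
    push_cast
    ring
  have h2 : (A.submatrix (Equiv.addRight j) (Equiv.addRight k)).det =
      (M.submatrix (fun p : Fin m => p.succ + j) (fun q : Fin m => q.succ + k)).det := by
    rw [Matrix.det_succ_row_zero, Finset.sum_eq_single 0]
    · have e : (A.submatrix (Equiv.addRight j) (Equiv.addRight k)).submatrix Fin.succ
          (Fin.succAbove 0) =
          M.submatrix (fun p : Fin m => p.succ + j) (fun q : Fin m => q.succ + k) := by
        ext p q
        have : p.succ + j ≠ j := by simp
        simp [hA]
      rw [e]
      simp [hA]
    · intro b _ hb
      simp [hA, hb]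
    · simp
  rw [← h2, h1, ← mul_assoc, ← mul_pow]
  simp

/-- Lemma 3.6 (transform cancellation): the difference of the left and right Fokas
forward transforms equals `(ν'(λ)/2π)` times the formal transform of `φ` at `λ`. -/
theorem stmt9 (n : ℕ) (hn : 1 ≤ n) (lam : ℂ) (ν : ℂ → ℂ) (w : ℂ)
    (α : ℂ) (hα : α = Complex.exp (2 * (Real.pi : ℂ) * Complex.I / (n : ℂ)))
    (νj : Fin n → ℂ) (hνj : ∀ j : Fin n, νj j = ν (α ^ (j : ℕ) * lam))
    (bstar βstar : Matrix (Fin n) (Fin n) ℂ)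
    (Mp Mm M : Matrix (Fin n) (Fin n) ℂ)
    (hMp : ∀ j k, Mp j k =
      ∑ ℓ : Fin n, (starRingEnd ℂ) (bstar k ℓ) * (-Complex.I * νj j) ^ (ℓ : ℕ))
    (hMm : ∀ j k, Mm j k = Complex.exp (-Complex.I * νj j) *
      ∑ ℓ : Fin n, (starRingEnd ℂ) (βstar k ℓ) * (-Complex.I * νj j) ^ (ℓ : ℕ))
    (hM : M = Mp + Mm)
    (hΔ : M.det ≠ 0)
    (X : Fin n → Fin n → Matrix (Fin (n - 1)) (Fin (n - 1)) ℂ)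
    (hX : ∀ (j k : Fin n) (p q : Fin (n - 1)),
      X j k p q = M ⟨(j.1 + 1 + p.1) % n, Nat.mod_lt _ (by omega)⟩
                    ⟨(k.1 + 1 + q.1) % n, Nat.mod_lt _ (by omega)⟩)
    (φ : ℝ → ℂ) (hφ : IntervalIntegrable φ volume 0 1)
    (Fp Fm : ℂ)
    (hFp : Fp = w / (2 * (Real.pi : ℂ) * M.det) *
      ∑ j : Fin n, ∑ k : Fin n, (-1 : ℂ) ^ ((n - 1) * (j.1 + k.1)) * (X j k).det *
        Mp ⟨0, hn⟩ k * ∫ t in (0 : ℝ)..1, Complex.exp (-Complex.I * νj j * t) * φ t)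
    (hFm : Fm = -w / (2 * (Real.pi : ℂ) * M.det) *
      ∑ j : Fin n, ∑ k : Fin n, (-1 : ℂ) ^ ((n - 1) * (j.1 + k.1)) * (X j k).det *
        Mm ⟨0, hn⟩ k * ∫ t in (0 : ℝ)..1, Complex.exp (-Complex.I * νj j * t) * φ t) :
    Fp - Fm = w / (2 * (Real.pi : ℂ)) *
      ∫ t in (0 : ℝ)..1, Complex.exp (-Complex.I * ν lam * t) * φ t := by
  obtain ⟨m, rfl⟩ : ∃ m, n = m + 1 := ⟨n - 1, by omega⟩
  have hXd : ∀ j k, (-1 : ℂ) ^ ((m + 1 - 1) * (j.1 + k.1)) * (X j k).det = M.adjugate k j := by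
    intro j k
    rw [← cyclic_cofactor m M j k]
    congr 2
    ext p q
    rw [hX, Matrix.submatrix_apply]
    congr 1
    · ext
      simp only [Fin.val_add, Fin.val_succ]
      congr 1; omega
    · ext
      simp only [Fin.val_add, Fin.val_succ]
      congr 1; omega
  simp only [hXd] at hFp hFm
  set I : Fin (m + 1) → ℂ := fun j =>
    ∫ t in (0 : ℝ)..1, Complex.exp (-Complex.I * νj j * t) * φ t with hI
  have hsum : ∑ j, ∑ k, M.adjugate k j * Mp ⟨0, hn⟩ k * I j +
      ∑ j, ∑ k, M.adjugate k j * Mm ⟨0, hn⟩ k * I j = M.det * I 0 := by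
    have h0 : ∀ j, ∑ k, M 0 k * M.adjugate k j = if 0 = j then M.det else 0 := by
      intro j
      have := congrFun (congrFun (Matrix.mul_adjugate M) 0) j
      rw [Matrix.mul_apply] at this
      rw [this]
      simp [Matrix.one_apply]
    rw [← Finset.sum_add_distrib]
    have : ∀ j, ∑ k, M.adjugate k j * Mp ⟨0, hn⟩ k * I j +
        ∑ k, M.adjugate k j * Mm ⟨0, hn⟩ k * I j = (if 0 = j then M.det else 0) * I j := by
      intro j
      rw [← h0, ← Finset.sum_add_distrib, Finset.sum_mul]
      refine Finset.sum_congr rfl fun k _ => ?_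
      have : M 0 k = Mp ⟨0, hn⟩ k + Mm ⟨0, hn⟩ k := by rw [hM]; rfl
      rw [this]; ring
    simp only [this]
    simp
  have hI0 : I 0 = ∫ t in (0 : ℝ)..1, Complex.exp (-Complex.I * ν lam * t) * φ t := by
    simp [hI, hνj]
  rw [← hI0]
  have hpi : (Real.pi : ℂ) ≠ 0 := by exact_mod_cast Real.pi_ne_zero
  have : Fp - Fm = w / (2 * (Real.pi : ℂ) * M.det) * (M.det * I 0) := by
    rw [← hsum, hFp, hFm]; ring
  rw [this]
  field_simp
end

section
/- Let N ≥ 1, let 0 ≤ ℓ ≤ 2N, let S be an invertible 2N×2N complex matrix, let 𝔅 be an ℓ×2N complex matrix of rank ℓ, and let ℨ be a (2N−ℓ)×2N complex matrix of rank 2N−ℓ. Then the following are equivalent: (i) 𝔅 · S^{-1} · ℨᴴ = 0 (the zero ℓ×(2N−ℓ) matrix); (ii) for all u, v ∈ ℂ^{2N}, if 𝔅 u = 0 and ℨ v = 0 then (S u) ⊙ v = 0. -/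
open Matrix

/-- The sesquilinear dot product `u ⊙ v = Σ_i u_i conj(v_i)`. -/
noncomputable def sesq {ι : Type*} [Fintype ι] (u v : ι → ℂ) : ℂ :=
  ∑ i, u i * (starRingEnd ℂ) (v i)

theorem sesq_adj {m n : ℕ} (Z : Matrix (Fin m) (Fin n) ℂ) (y : Fin m → ℂ) (v : Fin n → ℂ) :
    sesq (Zᴴ.mulVec y) v = sesq y (Z.mulVec v) := by
  have key : ∀ {k : ℕ} (a b : Fin k → ℂ), sesq a b = a ⬝ᵥ star b := fun a b => rfl
  rw [key, key, star_mulVec, dotProduct_comm, dotProduct_mulVec, dotProduct_comm]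

/-- For `Z` of full row rank, vectors orthogonal to `ker Z` lie in the range of `Zᴴ`. -/
theorem mem_range_of_orth {m n : ℕ} (Z : Matrix (Fin m) (Fin n) ℂ) (hZ : Z.rank = m)
    (w : Fin n → ℂ) (hw : ∀ v, Z.mulVec v = 0 → sesq w v = 0) : ∃ y, Zᴴ.mulVec y = w := by
  have htop : LinearMap.range (Z * Zᴴ).mulVecLin = ⊤ := by
    apply Submodule.eq_top_of_finrank_eq
    have h : (Z * Zᴴ).rank = Z.rank := by
      open ComplexOrder in
      exact rank_self_mul_conjTranspose Z
    rw [hZ] at h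
    simpa [Matrix.rank] using h
  obtain ⟨y, hy⟩ := LinearMap.range_eq_top.mp htop (Z.mulVec w)
  rw [mulVecLin_apply, ← mulVec_mulVec] at hy
  refine ⟨y, ?_⟩
  have hv : Z.mulVec (w - Zᴴ.mulVec y) = 0 := by rw [mulVec_sub, hy, sub_self]
  have h1 := hw _ hv
  have h2 := sesq_adj Z y (w - Zᴴ.mulVec y)
  rw [hv] at h2
  have h3 : sesq (w - Zᴴ.mulVec y) (w - Zᴴ.mulVec y) = 0 := by
    have : sesq (w - Zᴴ.mulVec y) (w - Zᴴ.mulVec y)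
      = sesq w (w - Zᴴ.mulVec y) - sesq (Zᴴ.mulVec y) (w - Zᴴ.mulVec y) := by
      simp only [sesq, ← Finset.sum_sub_distrib, ← sub_mul, Pi.sub_apply]
    rw [this, h1, h2]
    simp [sesq]
  have h4 : w - Zᴴ.mulVec y = 0 := by
    open ComplexOrder in
    exact dotProduct_self_star_eq_zero.mp h3
  exact (sub_eq_zero.mp h4).symm

/-- Theorem A.5 (checking adjointness), matrix form: `𝔅 S⁻¹ ℨᴴ = 0` iff the Lagrange
boundary term `(Su) ⊙ v` vanishes whenever `𝔅u = 0` and `ℨv = 0`. -/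
theorem stmt13 (N ℓ : ℕ) (hN : 1 ≤ N) (hℓ : ℓ ≤ 2 * N)
    (S : Matrix (Fin (2 * N)) (Fin (2 * N)) ℂ) (hS : IsUnit S.det)
    (B : Matrix (Fin ℓ) (Fin (2 * N)) ℂ) (hB : B.rank = ℓ)
    (Z : Matrix (Fin (2 * N - ℓ)) (Fin (2 * N)) ℂ) (hZ : Z.rank = 2 * N - ℓ) :
    B * S⁻¹ * Zᴴ = 0 ↔
      ∀ u v : Fin (2 * N) → ℂ, B.mulVec u = 0 → Z.mulVec v = 0 →
        sesq (S.mulVec u) v = 0 := by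
  have hfin : Module.finrank ℂ (LinearMap.ker (B * S⁻¹).mulVecLin)
      = Module.finrank ℂ (LinearMap.range (Zᴴ).mulVecLin) := by
    have h1 : (B * S⁻¹).rank = ℓ := by
      rw [rank_mul_eq_left_of_isUnit_det _ _ (isUnit_nonsing_inv_det S hS), hB]
    have h2 : (Zᴴ).rank = 2 * N - ℓ := by
      open ComplexOrder in
      rw [rank_conjTranspose, hZ]
    have h3 := LinearMap.finrank_range_add_finrank_ker (B * S⁻¹).mulVecLin
    rw [Matrix.rank] at h1 h2
    rw [h1, Module.finrank_fin_fun] at h3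
    omega
  constructor
  · intro h u v hu hv
    have hle : LinearMap.range (Zᴴ).mulVecLin ≤ LinearMap.ker (B * S⁻¹).mulVecLin := by
      rintro _ ⟨y, rfl⟩
      rw [LinearMap.mem_ker, mulVecLin_apply, mulVecLin_apply, mulVec_mulVec, h, zero_mulVec]
    have heq := Submodule.eq_of_le_of_finrank_eq hle hfin.symm
    have hm : S.mulVec u ∈ LinearMap.ker (B * S⁻¹).mulVecLin := by
      rw [LinearMap.mem_ker, mulVecLin_apply, mulVec_mulVec, Matrix.mul_assoc,
        nonsing_inv_mul S hS, Matrix.mul_one, hu]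
    rw [← heq] at hm
    obtain ⟨y, hy⟩ := hm
    rw [← hy, mulVecLin_apply, sesq_adj, hv]
    simp [sesq]
  · intro h
    have hle : LinearMap.ker (B * S⁻¹).mulVecLin ≤ LinearMap.range (Zᴴ).mulVecLin := by
      intro w hw
      rw [LinearMap.mem_ker, mulVecLin_apply] at hw
      refine mem_range_of_orth Z hZ w fun v hv => ?_
      have := h (S⁻¹.mulVec w) v (by rw [mulVec_mulVec, hw]) hv
      rwa [mulVec_mulVec, mul_nonsing_inv S hS, one_mulVec] at this
    have heq := Submodule.eq_of_le_of_finrank_eq hle hfin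
    apply Matrix.ext_of_mulVec_single
    intro i
    have hm : (Zᴴ).mulVecLin (Pi.single i 1) ∈ LinearMap.ker (B * S⁻¹).mulVecLin := by
      rw [heq]; exact ⟨_, rfl⟩
    rw [LinearMap.mem_ker, mulVecLin_apply, mulVecLin_apply, mulVec_mulVec] at hm
    rw [hm, zero_mulVec]
end

section
/- Let Λ be a type, a ∈ ℂ, z : Λ → ℂ, and T > 0. Let F and R be ℂ-linear maps from the space of functions ℝ → ℂ to the space of functions Λ → ℂ, let L be a ℂ-linear endomorphism of the space of functions ℝ → ℂ, and let G be a ℂ-linear map from the space of functions Λ → ℂ to the space of functions ℝ → ℂ. Let q : ℝ → (ℝ → ℂ) and set Q = q(0). Assume: (i) for every t ∈ [0,T], F(L(q t)) = (λ ↦ z(λ)·F(q t)(λ) + R(q t)(λ)); (ii) for every λ ∈ Λ and every t ∈ [0,T], the function s ↦ F(q s)(λ) has derivative −a · F(L(q t))(λ) at s = t; (iii) for every λ ∈ Λ and t ∈ [0,T], the function s ↦ e^{a·z(λ)·s} · R(q s)(λ) is integrable on [0,t]; (iv) for every t ∈ [0,T] and every x ∈ (0,1), G(λ ↦ ∫₀ᵗ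 e^{a·z(λ)·(s−t)} · R(q s)(λ) ds)(x) = 0; (v) for every t ∈ [0,T] and every x ∈ (0,1), G(F(q t))(x) = q t x. Then for every t ∈ [0,T] and every x ∈ (0,1), q t x = G(λ ↦ e^{−a·z(λ)·t} · F(Q)(λ))(x). -/
open MeasureTheory

/-- Abstract transform-method theorem (§2.5 / Theorem 5.1): if `F` weakly diagonalizes
`L` with remainder `R` controlled by the inverse transform `G`, and `G` inverts `F` on
`(0,1)`, then the solution of `∂_t q + a L q = 0` is `q(t,x) = G(e^{-azt} F Q)(x)`. -/
theorem stmt15 (Λ : Type*) (a : ℂ) (z : Λ → ℂ) (T : ℝ) (hT : 0 < T)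
    (F R : (ℝ → ℂ) →ₗ[ℂ] (Λ → ℂ))
    (L : (ℝ → ℂ) →ₗ[ℂ] (ℝ → ℂ))
    (G : (Λ → ℂ) →ₗ[ℂ] (ℝ → ℂ))
    (q : ℝ → (ℝ → ℂ)) (Q : ℝ → ℂ) (hQ : Q = q 0)
    (h1 : ∀ t ∈ Set.Icc (0 : ℝ) T,
      F (L (q t)) = fun lam => z lam * F (q t) lam + R (q t) lam)
    (h2 : ∀ lam : Λ, ∀ t ∈ Set.Icc (0 : ℝ) T,
      HasDerivAt (fun s => F (q s) lam) (-a * F (L (q t)) lam) t)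
    (h3 : ∀ lam : Λ, ∀ t ∈ Set.Icc (0 : ℝ) T,
      IntervalIntegrable (fun s => Complex.exp (a * z lam * s) * R (q s) lam) volume 0 t)
    (h4 : ∀ t ∈ Set.Icc (0 : ℝ) T, ∀ x ∈ Set.Ioo (0 : ℝ) 1,
      G (fun lam => ∫ s in (0 : ℝ)..t, Complex.exp (a * z lam * (s - t)) * R (q s) lam) x
        = 0)
    (h5 : ∀ t ∈ Set.Icc (0 : ℝ) T, ∀ x ∈ Set.Ioo (0 : ℝ) 1, G (F (q t)) x = q t x) :
    ∀ t ∈ Set.Icc (0 : ℝ) T, ∀ x ∈ Set.Ioo (0 : ℝ) 1,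
      q t x = G (fun lam => Complex.exp (-a * z lam * t) * F Q lam) x := by
  intro t ht x hx
  have key : F (q t) = (fun lam => Complex.exp (-a * z lam * t) * F Q lam)
      + (-a) • (fun lam => ∫ s in (0 : ℝ)..t,
          Complex.exp (a * z lam * (s - t)) * R (q s) lam) := by
    funext lam
    have hd : ∀ s ∈ Set.uIcc (0 : ℝ) t,
        HasDerivAt (fun s : ℝ => Complex.exp (a * z lam * s) * F (q s) lam)
          (-a * (Complex.exp (a * z lam * s) * R (q s) lam)) s := by
      intro s hs
      rw [Set.uIcc_of_le ht.1] at hs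
      have hs' : s ∈ Set.Icc (0 : ℝ) T := ⟨hs.1, hs.2.trans ht.2⟩
      have hF := h2 lam s hs'
      rw [h1 s hs'] at hF
      have he : HasDerivAt (fun s : ℝ => Complex.exp (a * z lam * s))
          (Complex.exp (a * z lam * s) * (a * z lam * 1)) s :=
        ((Complex.ofRealCLM.hasDerivAt (x := s)).const_mul (a * z lam)).cexp
      refine (he.mul hF).congr_deriv ?_
      ring
    have hI := intervalIntegral.integral_eq_sub_of_hasDerivAt hd ((h3 lam t ht).const_mul (-a))
    rw [intervalIntegral.integral_const_mul] at hI
    have hJ : (∫ s in (0 : ℝ)..t, Complex.exp (a * z lam * (s - t)) * R (q s) lam)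
        = Complex.exp (-a * z lam * t)
          * ∫ s in (0 : ℝ)..t, Complex.exp (a * z lam * s) * R (q s) lam := by
      rw [← intervalIntegral.integral_const_mul]
      congr 1
      funext s
      rw [← mul_assoc, ← Complex.exp_add]
      congr 2
      ring
    have hE : Complex.exp (-a * z lam * t) * Complex.exp (a * z lam * t) = 1 := by
      rw [← Complex.exp_add, ← Complex.exp_zero]
      congr 1
      ring
    simp only [Complex.ofReal_zero, mul_zero, Complex.exp_zero, one_mul] at hI
    simp only [Pi.add_apply, Pi.smul_apply, smul_eq_mul]
    rw [hJ, hQ]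
    linear_combination (-Complex.exp (-a * z lam * t)) * hI - F (q t) lam * hE
  rw [← h5 t ht x hx, key, map_add, map_smul, Pi.add_apply, Pi.smul_apply, h4 t ht x hx]
  simp
end

section
/- Let Λ be a type, a ∈ ℂ, z : Λ → ℂ, and T > 0. Let F and R be ℂ-linear maps from the space of functions ℝ → ℂ to the space of functions Λ → ℂ, let L be a ℂ-linear endomorphism of the space of functions ℝ → ℂ, and let G be a ℂ-linear map from the space of functions Λ → ℂ to the space of functions ℝ → ℂ. Let q : ℝ → (ℝ → ℂ), set Q = q(0), and let 𝒬 : ℝ → (ℝ → ℂ) and H : ℝ → (Λ → ℂ). Assume: (i) for every t ∈ [0,T], F(L(q t)) = (λ ↦ z(λ)·F(q t)(λ) + R(q t)(λ) + H(t)(λ)); (ii) for every λ ∈ Λ and every t ∈ [0,T], the function s ↦ F(q s)(λ) has derivative F(𝒬 t)(λ) − a · F(L(q t))(λ) at s = t; (iii) for every λ ∈ Λ and t ∈ [0,T], each of the functions s ↦ e^{a·z(λ)·s}·R(q s)(λ), s ↦ e^{a·z(λ)·s}·F(𝒬 s)(λ), s ↦ e^{a·z(λ)·s}·H(s)(λ)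 is integrable on [0,t]; (iv) for every t ∈ [0,T] and x ∈ (0,1), G(λ ↦ ∫₀ᵗ e^{a·z(λ)·(s−t)} · R(q s)(λ) ds)(x) = 0; (v) for every t ∈ [0,T] and x ∈ (0,1), G(F(q t))(x) = q t x. Then for every t ∈ [0,T] and every x ∈ (0,1): q t x = G(λ ↦ e^{−a·z(λ)·t}·F(Q)(λ))(x) + G(λ ↦ ∫₀ᵗ e^{a·z(λ)·(s−t)}·F(𝒬 s)(λ) ds)(x) − a · G(λ ↦ ∫₀ᵗ e^{a·z(λ)·(s−t)}·H(s)(λ) ds)(x). -/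
open MeasureTheory

/-- Abstract inhomogeneous transform-method theorem (Theorem 6.3): solution
representation for `∂_t q + a𝓛q = 𝒬` with inhomogeneous boundary term `H`. -/
theorem stmt16 (Λ : Type*) (a : ℂ) (z : Λ → ℂ) (T : ℝ) (hT : 0 < T)
    (F R : (ℝ → ℂ) →ₗ[ℂ] (Λ → ℂ))
    (L : (ℝ → ℂ) →ₗ[ℂ] (ℝ → ℂ))
    (G : (Λ → ℂ) →ₗ[ℂ] (ℝ → ℂ))
    (q : ℝ → (ℝ → ℂ)) (Q : ℝ → ℂ) (hQ : Q = q 0)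
    (𝒬 : ℝ → (ℝ → ℂ)) (H : ℝ → (Λ → ℂ))
    (h1 : ∀ t ∈ Set.Icc (0 : ℝ) T,
      F (L (q t)) = fun lam => z lam * F (q t) lam + R (q t) lam + H t lam)
    (h2 : ∀ lam : Λ, ∀ t ∈ Set.Icc (0 : ℝ) T,
      HasDerivAt (fun s => F (q s) lam) (F (𝒬 t) lam - a * F (L (q t)) lam) t)
    (h3 : ∀ lam : Λ, ∀ t ∈ Set.Icc (0 : ℝ) T,
      IntervalIntegrable (fun s => Complex.exp (a * z lam * s) * R (q s) lam)
        volume 0 t ∧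
      IntervalIntegrable (fun s => Complex.exp (a * z lam * s) * F (𝒬 s) lam)
        volume 0 t ∧
      IntervalIntegrable (fun s => Complex.exp (a * z lam * s) * H s lam) volume 0 t)
    (h4 : ∀ t ∈ Set.Icc (0 : ℝ) T, ∀ x ∈ Set.Ioo (0 : ℝ) 1,
      G (fun lam => ∫ s in (0 : ℝ)..t, Complex.exp (a * z lam * (s - t)) * R (q s) lam) x
        = 0)
    (h5 : ∀ t ∈ Set.Icc (0 : ℝ) T, ∀ x ∈ Set.Ioo (0 : ℝ) 1, G (F (q t)) x = q t x) :
    ∀ t ∈ Set.Icc (0 : ℝ) T, ∀ x ∈ Set.Ioo (0 : ℝ) 1,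
      q t x =
        G (fun lam => Complex.exp (-a * z lam * t) * F Q lam) x +
        G (fun lam =>
          ∫ s in (0 : ℝ)..t, Complex.exp (a * z lam * (s - t)) * F (𝒬 s) lam) x -
        a * G (fun lam =>
          ∫ s in (0 : ℝ)..t, Complex.exp (a * z lam * (s - t)) * H s lam) x := by
  intro t ht x hx
  have key : F (q t) =
      (fun lam => Complex.exp (-a * z lam * t) * F Q lam) +
      (fun lam => ∫ s in (0 : ℝ)..t, Complex.exp (a * z lam * (s - t)) * F (𝒬 s) lam) -
      a • (fun lam => ∫ s in (0 : ℝ)..t, Complex.exp (a * z lam * (s - t)) * H s lam) -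
      a • (fun lam => ∫ s in (0 : ℝ)..t, Complex.exp (a * z lam * (s - t)) * R (q s) lam) := by
    funext lam
    simp only [Pi.add_apply, Pi.sub_apply, Pi.smul_apply, smul_eq_mul]
    obtain ⟨iR, iQ, iH⟩ := h3 lam t ht
    have pull : ∀ f : ℝ → ℂ,
        ∫ s in (0 : ℝ)..t, Complex.exp (a * z lam * (s - t)) * f s =
        Complex.exp (-a * z lam * t) *
          ∫ s in (0 : ℝ)..t, Complex.exp (a * z lam * s) * f s := by
      intro f
      rw [← intervalIntegral.integral_const_mul]
      congr 1
      funext s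
      rw [← mul_assoc, ← Complex.exp_add]
      congr 2
      ring
    have ftc := intervalIntegral.integral_eq_sub_of_hasDerivAt (a := 0) (b := t)
      (f := fun s : ℝ => Complex.exp (a * z lam * s) * F (q s) lam)
      (f' := fun s : ℝ => Complex.exp (a * z lam * s) * F (𝒬 s) lam
        - a * (Complex.exp (a * z lam * s) * H s lam)
        - a * (Complex.exp (a * z lam * s) * R (q s) lam))
      (by
        intro s hs
        rw [Set.uIcc_of_le ht.1] at hs
        have hs' : s ∈ Set.Icc (0 : ℝ) T := ⟨hs.1, hs.2.trans ht.2⟩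
        have d1 : HasDerivAt (fun s : ℝ => Complex.exp (a * z lam * s))
            (Complex.exp (a * z lam * s) * (a * z lam * 1)) s :=
          ((Complex.ofRealCLM.hasDerivAt (x := s)).const_mul (a * z lam)).cexp
        have d2 := d1.mul (h2 lam s hs')
        rw [h1 s hs'] at d2
        refine d2.congr_deriv ?_
        ring)
      ((iQ.sub (iH.const_mul a)).sub (iR.const_mul a))
    rw [intervalIntegral.integral_sub (iQ.sub (iH.const_mul a)) (iR.const_mul a),
      intervalIntegral.integral_sub iQ (iH.const_mul a),
      intervalIntegral.integral_const_mul, intervalIntegral.integral_const_mul] at ftc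
    rw [pull, pull, pull, hQ]
    have e : Complex.exp (-a * z lam * t) * Complex.exp (a * z lam * t) = 1 := by
      rw [← Complex.exp_add, ← Complex.exp_zero]
      congr 1
      ring
    simp only [Complex.ofReal_zero, mul_zero, Complex.exp_zero, one_mul] at ftc
    linear_combination (-Complex.exp (-a * z lam * t)) * ftc - F (q t) lam * e
  rw [← h5 t ht x hx, key]
  simp only [map_add, map_sub, map_smul, Pi.add_apply, Pi.sub_apply, Pi.smul_apply, smul_eq_mul]
  rw [h4 t ht x hx]
  ring
end
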